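/- Let (Q, m, k) be a commutative Noetherian local ring and let f, g be an exact pair of zerodivisors in m, i.e. f and g are nonzero elements of m with ann_Q(f) = (g) and ann_Q(g) = (f). Set R = Q/(f). If M is a finitely generated R-module with f ∈ m·ann_Q(M), then β_i^R(M) = β_i^Q(M) for every integer i ≥ 0; that is, P_M^R(t) = P_M^Q(t). (This is the main theorem for quasi-complete intersection maps in the case where the kernel is generated by a single exact zerodivisor, in which case grade_Q R = 0.) -/

import Mathlib

open CategoryTheory TensorProduct

/-- The `i`-th Betti number of a module `M` over a local ring `A`:
`β_i^A(M) = dim_k Tor_i^A(M, k)`, computed as the `k`-dimension of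
`k ⊗_A Tor_i^A(M, k)` (the two agree since `Tor_i^A(M, k)` is a `k`-vector
space, being annihilated by the maximal ideal of `A`). -/
noncomputable def bettiNumber (A : Type) [CommRing A] [IsLocalRing A]
    (M : Type) [AddCommGroup M] [Module A M] (i : ℕ) : ℕ :=
  Module.finrank (IsLocalRing.ResidueField A)
    (IsLocalRing.ResidueField A ⊗[A]
      (((Tor (ModuleCat A) i).obj (ModuleCat.of A M)).obj
        (ModuleCat.of A (IsLocalRing.ResidueField A))))

/-! Let `J = ann M`. There are a module `P`, a linear form `d` from `P` onto the maximal ideal and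
`z ∈ J • P` with `d z = f` such that the periodic sequence `P → Q → P → Q` with maps `d` and `g z`
is exact over `Q`, and the one with maps `d` and `z` is exact over `R = Q/(f)`. Take a free module
mapping onto the maximal ideal, divide by the Koszul relations, then by a submodule maximal for
avoiding `g z`; that `g z` is not a Koszul boundary is seen from divided powers in the exterior
algebra.

Both periodic sequences specialize the same data: over `B = Q[T_j | j ∈ J]`, let `w` be `z` with its
coefficients `j ∈ J` replaced by `T_j`. Then `T_j ↦ j` sends `w` to `z` over `R`, and `T_j ↦ g j`
sends `w` to `g z` over `Q`. A projective resolution of `P` over `Q` stays exact over `R`, since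
`f, g` is also an exact pair on `P`. Splicing it with itself along `d` and `w` gives projective
`B`-modules `F` that become a resolution of the residue field over `R` and over `Q`. As every `T_j`
acts by zero on `M` under both specializations, `M ⊗ F` computes `Tor(M, k)` over both rings. -/

universe u

namespace ExactZerodivisor

section ExactPair

variable {Q : Type*} [CommRing Q] {f g : Q}

/-- `f` and `g` are an exact pair of zerodivisors on the module `N`: the kernel of each
homothety is the image of the other. For `N = Q` this says `ann f = (g)` and `ann g = (f)`. -/
structure IsExactPair (f g : Q) (N : Type*) [AddCommGroup N] [Module Q N] : Prop where
  exact_left : Function.Exact (LinearMap.lsmul Q N g) (LinearMap.lsmul Q N f)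
  exact_right : Function.Exact (LinearMap.lsmul Q N f) (LinearMap.lsmul Q N g)

namespace IsExactPair

variable {N : Type*} [AddCommGroup N] [Module Q N]

theorem symm (h : IsExactPair f g N) : IsExactPair g f N :=
  ⟨h.exact_right, h.exact_left⟩

theorem smul_eq_zero_iff (h : IsExactPair f g N) {x : N} : f • x = 0 ↔ ∃ y, g • y = x :=
  h.exact_left x

theorem of_mul_eq_zero_iff (hf : ∀ x : Q, x * f = 0 ↔ x ∈ Ideal.span {g})
    (hg : ∀ x : Q, x * g = 0 ↔ x ∈ Ideal.span {f}) : IsExactPair f g Q := by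
  have exact_lsmul {a b : Q} (h : ∀ x, x * b = 0 ↔ x ∈ Ideal.span {a}) :
      Function.Exact (LinearMap.lsmul Q Q a) (LinearMap.lsmul Q Q b) := fun x => by
    simp only [LinearMap.lsmul_apply, smul_eq_mul, mul_comm b x, h x,
      Ideal.mem_span_singleton', mul_comm _ a, Set.mem_range]
  exact ⟨exact_lsmul hf, exact_lsmul hg⟩

theorem smul_smul_eq_zero (h : IsExactPair f g N) (x : N) : f • g • x = 0 :=
  h.smul_eq_zero_iff.2 ⟨x, rfl⟩

theorem mul_eq_zero (h : IsExactPair f g Q) : f * g = 0 := by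
  simpa using h.smul_smul_eq_zero 1

theorem of_flat [Module.Flat Q N] (h : IsExactPair f g Q) : IsExactPair f g N := by
  have exact_lsmul {a b : Q}
      (hab : Function.Exact (LinearMap.lsmul Q Q a) (LinearMap.lsmul Q Q b)) :
      Function.Exact (LinearMap.lsmul Q N a) (LinearMap.lsmul Q N b) := by
    refine Function.Exact.of_ladder_linearEquiv_of_exact (e₁ := TensorProduct.rid Q N)
      (e₂ := TensorProduct.rid Q N) (e₃ := TensorProduct.rid Q N) ?_ ?_
      (Module.Flat.lTensor_exact N hab) <;>
    · ext x
      simp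
  exact ⟨exact_lsmul h.exact_left, exact_lsmul h.exact_right⟩

end IsExactPair

end ExactPair

section Koszul

variable {Q V : Type*} [CommRing Q] [AddCommGroup V] [Module Q V]

/-- The boundary of `p ∧ p'` in the Koszul complex of the linear form `d`. -/
def koszulBoundary (d : Module.Dual Q V) (p p' : V) : V := d p • p' - d p' • p

/-- The submodule of degree-one boundaries in the Koszul complex of the linear form `d`. -/
def koszulBoundaries (d : Module.Dual Q V) : Submodule Q V :=
  Submodule.span Q {v | ∃ p p', koszulBoundary d p p' = v}

variable {d : Module.Dual Q V}

local notation "ι" => ExteriorAlgebra.ι Q (M := V)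
local notation "∂" => CliffordAlgebra.contractLeft (Q := (0 : QuadraticForm Q V)) d

theorem ι_mul_ι_swap (a b : V) : ι a * ι b = -(ι b * ι a) :=
  eq_neg_of_add_eq_zero_left (ExteriorAlgebra.ι_add_mul_swap a b)

theorem ι_koszulBoundary_mul (p p' : V) : ι (koszulBoundary d p p') * (ι p * ι p') = 0 := by
  rw [koszulBoundary, map_sub, map_smul, map_smul, sub_mul, smul_mul_assoc, smul_mul_assoc,
    ← mul_assoc (ι p) (ι p), ExteriorAlgebra.ι_sq_zero, ι_mul_ι_swap p p', mul_neg, ← mul_assoc,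
    ExteriorAlgebra.ι_sq_zero]
  simp

theorem contractLeft_ι_mul_ι_mul (p p' : V) (x : ExteriorAlgebra Q V) :
    ∂ (ι p * ι p' * x) = ι (koszulBoundary d p p') * x + ι p * ι p' * ∂ x := by
  rw [mul_assoc, CliffordAlgebra.contractLeft_ι_mul, CliffordAlgebra.contractLeft_ι_mul]
  simp only [koszulBoundary, mul_sub, map_sub, map_smul, sub_mul, smul_mul_assoc, mul_smul_comm,
    mul_assoc]
  abel

variable (d) in
/-- The degree-one boundary `v` of the Koszul complex of `d` has a primitive `s 1` with a
locally nilpotent system of divided powers `s n`, so that formally `∂ (exp s) = v * exp s`. -/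
def HasDividedPowers (v : V) : Prop :=
  ∃ s : ℕ → ExteriorAlgebra Q V,
    s 0 = 1 ∧ (∀ n, ∂ (s (n + 1)) = ι v * s n) ∧ ∃ N, ∀ n, N ≤ n → s n = 0

theorem hasDividedPowers_zero : HasDividedPowers d (0 : V) :=
  ⟨fun n => if n = 0 then 1 else 0, rfl, fun n => by simp, 1, fun n hn => if_neg (by omega)⟩

theorem HasDividedPowers.add_koszulBoundary {v : V} (hv : HasDividedPowers d v) (p p' : V) :
    HasDividedPowers d (v + koszulBoundary d p p') := by
  obtain ⟨s, s_zero, contract_s, N, s_large⟩ := hv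
  refine ⟨fun n => Nat.casesOn n 1 fun n => s (n + 1) + ι p * ι p' * s n, rfl, fun n => ?_, N + 1,
    fun n hn => ?_⟩
  · have contract_succ : ∂ (s (n + 1) + ι p * ι p' * s n) =
        ι v * s n + (ι (koszulBoundary d p p') * s n + ι p * ι p' * ∂ (s n)) := by
      rw [map_add, contract_s, contractLeft_ι_mul_ι_mul]
    have commute_v : ι p * ι p' * ι v = ι v * (ι p * ι p') := by
      rw [mul_assoc, ι_mul_ι_swap p' v, mul_neg, ← mul_assoc, ι_mul_ι_swap p v, neg_mul, neg_neg,
        mul_assoc]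
    refine contract_succ.trans ?_
    cases n with
    | zero => simp [s_zero]
    | succ n =>
      rw [contract_s, ← mul_assoc, commute_v, map_add, add_mul, mul_add, mul_add,
        ← mul_assoc (ι (koszulBoundary d p p')), ι_koszulBoundary_mul, zero_mul, add_zero]
      simp only [mul_assoc]
      abel
  · obtain ⟨n, rfl⟩ : ∃ k, n = k + 1 := ⟨n - 1, by omega⟩
    simp [s_large n (by omega), s_large (n + 1) (by omega)]

theorem hasDividedPowers_of_mem_koszulBoundaries {v : V} (hv : v ∈ koszulBoundaries d) :
    HasDividedPowers d v := by
  suffices ∀ w, HasDividedPowers d w → HasDividedPowers d (w + v) by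
    simpa using this 0 hasDividedPowers_zero
  induction hv using Submodule.closure_induction with
  | zero => simp
  | add x y _ _ hx hy => exact fun w hw => by simpa [add_assoc] using hy _ (hx w hw)
  | smul_mem r x hx =>
    obtain ⟨p, p', rfl⟩ := hx
    have smul_koszulBoundary :
        r • koszulBoundary d p p' = koszulBoundary d (r • p) p' := by
      simp [koszulBoundary, smul_sub, smul_smul, mul_comm]
    exact fun w hw => smul_koszulBoundary ▸ hw.add_koszulBoundary _ _

theorem algebraMapInv_contractLeft_mem {I : Ideal Q} (hI : ∀ v, d v ∈ I)
    (x : ExteriorAlgebra Q V) : ExteriorAlgebra.algebraMapInv (∂ x) ∈ I := by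
  induction x using CliffordAlgebra.left_induction with
  | algebraMap r => simp
  | add x y hx hy => simpa only [map_add] using I.add_mem hx hy
  | ι_mul x v _ =>
    have algebraMapInv_ι : ExteriorAlgebra.algebraMapInv (ι v) = (0 : Q) := by
      simp [ExteriorAlgebra.algebraMapInv]
    rw [CliffordAlgebra.contractLeft_ι_mul, map_sub, map_mul, map_smul, algebraMapInv_ι, zero_mul,
      sub_zero]
    exact I.mul_mem_right _ (hI v)

instance free_exteriorAlgebra [Module.Free Q V] : Module.Free Q (ExteriorAlgebra Q V) := by
  classical
  let _ : LinearOrder (Module.Free.ChooseBasisIndex Q V) := linearOrderOfSTO WellOrderingRel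
  exact Module.Free.of_basis (Module.Free.chooseBasis Q V).ExteriorAlgebra

theorem exists_eq_contractLeft_add_smul {f g : Q} (h : IsExactPair f g (ExteriorAlgebra Q V))
    {F : V} (hF : d F = f) {a b : ExteriorAlgebra Q V} (hab : ∂ b = ι (g • F) * a)
    (hFa : ι F * ∂ a = 0) (hb : ∃ u v, b = ∂ u + g • v) : ∃ u v, a = ∂ u + g • v := by
  obtain ⟨u, v, rfl⟩ := hb
  obtain ⟨u', hu'⟩ : ∃ u', f • u' = ι F * a - ∂ v := by
    refine h.symm.smul_eq_zero_iff.1 ?_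
    rw [map_add, CliffordAlgebra.contractLeft_contractLeft, zero_add, map_smul, map_smul,
      smul_mul_assoc] at hab
    rw [smul_sub, hab, sub_self]
  obtain ⟨v', hv'⟩ : ∃ v', g • v' = a - ∂ u' := by
    refine h.smul_eq_zero_iff.1 ?_
    have contract_u' := congrArg ∂ hu'
    rw [map_sub, CliffordAlgebra.contractLeft_contractLeft, sub_zero,
      CliffordAlgebra.contractLeft_ι_mul, hF, hFa, sub_zero, map_smul] at contract_u'
    rw [smul_sub, contract_u', sub_self]
  exact ⟨u', v', by rw [hv']; abel⟩

theorem smul_notMem_koszulBoundaries [Module.Free Q V] {f g : Q} (h : IsExactPair f g Q)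
    {I : Ideal Q} (hI : I ≠ ⊤) (hgI : g ∈ I) (hdI : ∀ v, d v ∈ I) {F : V} (hF : d F = f) :
    g • F ∉ koszulBoundaries d := by
  intro hmem
  obtain ⟨s, s_zero, contract_s, N, s_large⟩ := hasDividedPowers_of_mem_koszulBoundaries hmem
  have ι_mul_contract_s (n : ℕ) : ι F * ∂ (s n) = 0 := by
    cases n with
    | zero => simp [s_zero]
    | succ n => rw [contract_s, ← mul_assoc, map_smul, mul_smul_comm, ExteriorAlgebra.ι_sq_zero,
        smul_zero, zero_mul]
  have exists_s_eq {n : ℕ} (hn : n ≤ N) : ∃ u v, s n = ∂ u + g • v := by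
    induction hn using Nat.decreasingInduction with
    | of_succ n _ ih =>
      exact exists_eq_contractLeft_add_smul (h.of_flat (N := ExteriorAlgebra Q V)) hF (contract_s n)
        (ι_mul_contract_s n) ih
    | self => exact ⟨0, 0, by simp [s_large N le_rfl]⟩
  obtain ⟨u, v, huv⟩ := exists_s_eq N.zero_le
  have one_eq : 1 = ExteriorAlgebra.algebraMapInv (∂ u) + g * ExteriorAlgebra.algebraMapInv v := by
    simpa [s_zero] using congrArg ExteriorAlgebra.algebraMapInv huv
  refine hI ((Ideal.eq_top_iff_one I).2 (one_eq ▸ ?_))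
  exact I.add_mem (algebraMapInv_contractLeft_mem hdI u) (I.mul_mem_right _ hgI)

end Koszul

section PeriodicForm

open IsLocalRing

/-- A linear form `d` mapping `P` onto the maximal ideal, together with `z : P`, such that
`⋯ → P → Q → P → Q → k` with maps alternating between `d` and `q ↦ q • g • z` is exact, and
satisfying the Koszul relation `d p • p' = d p' • p`. -/
structure IsPeriodicForm {Q : Type*} [CommRing Q] [IsLocalRing Q] (f g : Q) {P : Type*}
    [AddCommGroup P] [Module Q P] (d : Module.Dual Q P) (z : P) : Prop where
  apply_smul_comm : ∀ p p', d p • p' = d p' • p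
  range_eq : LinearMap.range d = maximalIdeal Q
  apply_eq : d z = f
  exists_smul_eq : ∀ p, d p = 0 → ∃ q : Q, q • g • z = p
  mem_maximalIdeal : ∀ q : Q, q • g • z = 0 → q ∈ maximalIdeal Q

section

variable {Q P : Type*} [CommRing Q] [IsLocalRing Q] [AddCommGroup P] [Module Q P] {f g : Q}
  {d : Module.Dual Q P} {z : P}

theorem IsExactPair.of_isPeriodicForm (h : IsExactPair f g Q) (hd : IsPeriodicForm f g d z) :
    IsExactPair f g P := by
  have exists_apply_eq {q : Q} (hq : q • g • z = 0) : ∃ p, d p = q := by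
    have := hd.mem_maximalIdeal q hq
    rwa [← hd.range_eq] at this
  refine ⟨fun p => ⟨fun hp => ?_, ?_⟩, fun p => ⟨fun hp => ?_, ?_⟩⟩
  · simp only [LinearMap.lsmul_apply] at hp
    obtain ⟨q, hq⟩ := h.smul_eq_zero_iff.1 ((map_smul d f p).symm.trans (by simp [hp]))
    obtain ⟨p', rfl⟩ := exists_apply_eq (q := q) (by
      rw [smul_smul, mul_comm, ← smul_eq_mul, hq, hd.apply_smul_comm, hd.apply_eq, hp])
    obtain ⟨q', hq'⟩ := hd.exists_smul_eq (p - g • p') (by rw [map_sub, map_smul, hq, sub_self])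
    exact ⟨p' + q' • z, by rw [LinearMap.lsmul_apply, smul_add, smul_comm g q', hq']; abel⟩
  · rintro ⟨p', rfl⟩
    simp [smul_smul, h.symm.mul_eq_zero]
  · simp only [LinearMap.lsmul_apply] at hp
    obtain ⟨q, hq⟩ := h.symm.smul_eq_zero_iff.1 ((map_smul d g p).symm.trans (by simp [hp]))
    obtain ⟨q', hq'⟩ := hd.exists_smul_eq (p - q • z) (by
      rw [map_sub, map_smul, hd.apply_eq, ← hq, smul_eq_mul, smul_eq_mul, mul_comm, sub_self])
    have hp_eq : (q + q' * g) • z = p := by rw [add_smul, mul_smul, hq']; abel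
    obtain ⟨p', hp'⟩ := exists_apply_eq (q := q + q' * g) (by rw [smul_comm, hp_eq, hp])
    exact ⟨p', by rw [LinearMap.lsmul_apply, ← hp_eq, ← hp', ← hd.apply_eq, hd.apply_smul_comm]⟩
  · rintro ⟨p', rfl⟩
    simp [smul_smul, h.mul_eq_zero]

end

theorem exists_mem_smul_top_of_mem_mul {Q V : Type*} [CommRing Q] [AddCommGroup V] [Module Q V]
    (d : Module.Dual Q V) {I J : Ideal Q} (hd : LinearMap.range d = I) {f : Q} (hf : f ∈ I * J) :
    ∃ v ∈ J • (⊤ : Submodule Q V), d v = f := by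
  rw [mul_comm, ← smul_eq_mul, ← hd, LinearMap.range_eq_map, ← Submodule.map_smul''] at hf
  exact hf

section

variable {Q V : Type*} [CommRing Q] [AddCommGroup V] [Module Q V] (d : Module.Dual Q V)

theorem koszulBoundaries_le_ker : koszulBoundaries d ≤ LinearMap.ker d := by
  rw [koszulBoundaries, Submodule.span_le]
  rintro _ ⟨p, p', rfl⟩
  simp [koszulBoundary, mul_comm]

theorem liftQ_koszulBoundaries_apply_smul_comm (p p' : V ⧸ koszulBoundaries d) :
    (koszulBoundaries d).liftQ d (koszulBoundaries_le_ker d) p • p' =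
      (koszulBoundaries d).liftQ d (koszulBoundaries_le_ker d) p' • p := by
  obtain ⟨v, rfl⟩ := Submodule.Quotient.mk_surjective _ p
  obtain ⟨v', rfl⟩ := Submodule.Quotient.mk_surjective _ p'
  rw [Submodule.liftQ_apply, Submodule.liftQ_apply, ← Submodule.Quotient.mk_smul,
    ← Submodule.Quotient.mk_smul, Submodule.Quotient.eq]
  exact Submodule.subset_span ⟨v, v', rfl⟩

end

variable {Q : Type u} [CommRing Q] [IsLocalRing Q]

theorem exists_hyperplane_notMem {P : Type*} [AddCommGroup P] [Module Q P] {K : Submodule Q P}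
    (hK : Module.IsTorsionBySet Q K (maximalIdeal Q)) {x : P} (hxK : x ∈ K) (hx : x ≠ 0) :
    ∃ L ≤ K, x ∉ L ∧ ∀ y ∈ K, ∃ q : Q, q • x - y ∈ L := by
  let _ := hK.module
  let _ := Ideal.Quotient.field (maximalIdeal Q)
  have : IsSemisimpleModule Q K := hK.isSemisimpleModule_iff.1 inferInstance
  obtain ⟨L, hL⟩ := exists_isCompl (Submodule.span Q {(⟨x, hxK⟩ : K)})
  refine ⟨L.map K.subtype, Submodule.map_subtype_le _ _, ?_, fun y hy => ?_⟩
  · rintro ⟨x', hx'L, rfl⟩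
    exact hx (congrArg Subtype.val
      (Submodule.disjoint_def.1 hL.disjoint x' (Submodule.mem_span_singleton_self _) hx'L))
  · obtain ⟨s, hs, l, hl, hsl⟩ :=
      Submodule.mem_sup.1 (hL.sup_eq_top.ge (Submodule.mem_top (x := (⟨y, hy⟩ : K))))
    obtain ⟨q, rfl⟩ := Submodule.mem_span_singleton.1 hs
    obtain rfl : q • x + l = y := congrArg Subtype.val hsl
    exact ⟨q, -l, L.neg_mem hl, by simp⟩

theorem mem_maximalIdeal_of_smul_mem {W : Type*} [AddCommGroup W] [Module Q W]
    {L : Submodule Q W} {x : W} (hx : x ∉ L) {q : Q} (hq : q • x ∈ L) : q ∈ maximalIdeal Q := by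
  by_contra hq'
  exact hx ((Submodule.smul_mem_iff_of_isUnit L (notMem_maximalIdeal.1 hq')).1 hq)

theorem exists_isPeriodicForm_liftQ {P : Type*} [AddCommGroup P] [Module Q P] {f g : Q}
    (hfg : f * g = 0) {d : Module.Dual Q P} (apply_smul_comm : ∀ p p', d p • p' = d p' • p)
    (range_eq : LinearMap.range d = maximalIdeal Q) {z : P} (hz : d z = f) (hgz : g • z ≠ 0) :
    ∃ (L : Submodule Q P) (hL : L ≤ LinearMap.ker d),
      IsPeriodicForm f g (L.liftQ d hL) (L.mkQ z) := by
  have ker_torsion : Module.IsTorsionBySet Q (LinearMap.ker d) (maximalIdeal Q) := by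
    rintro p ⟨_, hm⟩
    rw [← range_eq] at hm
    obtain ⟨p', rfl⟩ := hm
    ext
    simpa [p.2] using apply_smul_comm p' p
  obtain ⟨L, hLK, gz_notMem, exists_sub_mem⟩ :=
    exists_hyperplane_notMem ker_torsion (x := g • z) (by simp [hz, mul_comm, hfg]) hgz
  refine ⟨L, hLK, ?_, ?_, ?_, ?_, ?_⟩
  · intro p p'
    obtain ⟨p, rfl⟩ := Submodule.Quotient.mk_surjective _ p
    obtain ⟨p', rfl⟩ := Submodule.Quotient.mk_surjective _ p'
    simp only [Submodule.liftQ_apply, ← Submodule.Quotient.mk_smul, apply_smul_comm p p']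
  · rw [Submodule.range_liftQ, range_eq]
  · simp [hz]
  · intro p hp
    obtain ⟨p, rfl⟩ := Submodule.Quotient.mk_surjective _ p
    obtain ⟨q, hq⟩ := exists_sub_mem p (by simpa using hp)
    refine ⟨q, ?_⟩
    rwa [Submodule.mkQ_apply, ← Submodule.Quotient.mk_smul, ← Submodule.Quotient.mk_smul,
      Submodule.Quotient.eq]
  · intro q hq
    rw [← map_smul, ← map_smul, Submodule.mkQ_apply, Submodule.Quotient.mk_eq_zero] at hq
    exact mem_maximalIdeal_of_smul_mem gz_notMem hq

theorem exists_isPeriodicForm {f g : Q} (h : IsExactPair f g Q) (hg : g ∈ maximalIdeal Q)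
    {J : Ideal Q} (hf : f ∈ maximalIdeal Q * J) :
    ∃ (P : Type u) (_ : AddCommGroup P) (_ : Module Q P) (d : Module.Dual Q P) (z : P),
      IsPeriodicForm f g d z ∧ z ∈ J • (⊤ : Submodule Q P) := by
  let d : Module.Dual Q (maximalIdeal Q →₀ Q) := Finsupp.linearCombination Q (↑)
  have range_d : LinearMap.range d = maximalIdeal Q := by
    rw [Finsupp.range_linearCombination, Subtype.range_coe]
    exact Ideal.span_eq _
  obtain ⟨F, hFJ, hF⟩ := exists_mem_smul_top_of_mem_mul d range_d hf
  have gF_notMem : g • F ∉ koszulBoundaries d :=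
    smul_notMem_koszulBoundaries h (maximalIdeal.isMaximal Q).ne_top hg
      (fun v => range_d.le (LinearMap.mem_range_self d v)) hF
  obtain ⟨L, hL, periodic⟩ := exists_isPeriodicForm_liftQ h.mul_eq_zero
    (liftQ_koszulBoundaries_apply_smul_comm d) ((Submodule.range_liftQ ..).trans range_d)
    (z := (koszulBoundaries d).mkQ F) hF
    (by rwa [← map_smul, Submodule.mkQ_apply, ne_eq, Submodule.Quotient.mk_eq_zero])
  refine ⟨_, _, _, _, _, periodic, ?_⟩
  have := Submodule.mem_map_of_mem (f := L.mkQ ∘ₗ (koszulBoundaries d).mkQ) hFJ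
  rw [Submodule.map_smul''] at this
  exact Submodule.smul_mono le_rfl le_top this

end PeriodicForm

section BaseChange

variable {S N N' N'' : Type*} [CommRing S] [AddCommGroup N] [Module S N] [AddCommGroup N']
  [Module S N'] [AddCommGroup N''] [Module S N'']

theorem dual_baseChange_one_tmul (d : Module.Dual S N) (A : Type*) [CommRing A] [Algebra S A]
    (p : N) : d.baseChange A (1 ⊗ₜ p) = algebraMap S A (d p) := by
  rw [Module.Dual.baseChange_apply_tmul, Algebra.algebraMap_eq_smul_one]

theorem exact_baseChange_iff {A : Type*} [CommRing A] [Algebra S A]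
    (surj : Function.Surjective (algebraMap S A)) {a : N →ₗ[S] N'} {b : N' →ₗ[S] N''} :
    Function.Exact (a.baseChange A) (b.baseChange A) ↔
      ∀ x, (1 : A) ⊗ₜ[S] b x = 0 ↔ ∃ w, (1 : A) ⊗ₜ[S] a w = 1 ⊗ₜ x := by
  simp only [Function.Exact, (TensorProduct.mk_surjective S N' A surj).forall, Set.mem_range,
    (TensorProduct.mk_surjective S N A surj).exists, TensorProduct.mk_apply,
    LinearMap.baseChange_tmul]

theorem exact_baseChange_baseChange (B A : Type*) [CommRing B] [CommRing A] [Algebra S B]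
    [Algebra S A] [Algebra B A] [IsScalarTower S B A] {a : N →ₗ[S] N'} {b : N' →ₗ[S] N''}
    (h : Function.Exact (a.baseChange A) (b.baseChange A)) :
    Function.Exact ((a.baseChange B).baseChange A) ((b.baseChange B).baseChange A) := by
  refine (Function.Exact.iff_of_ladder_linearEquiv
    (e₁ := AlgebraTensorModule.cancelBaseChange S B A A N)
    (e₂ := AlgebraTensorModule.cancelBaseChange S B A A N')
    (e₃ := AlgebraTensorModule.cancelBaseChange S B A A N'') ?_ ?_).1 h <;>
  · ext x
    simp

theorem one_tmul_eq_zero_iff {A : Type*} [CommRing A] [Algebra S A] {e : S}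
    (surj : Function.Surjective (algebraMap S A))
    (ker_eq : RingHom.ker (algebraMap S A) = Ideal.span {e}) {x : N} :
    (1 : A) ⊗ₜ[S] x = 0 ↔ ∃ v, e • v = x := by
  have exact_lsmul : Function.Exact (LinearMap.lsmul S S e) (Algebra.linearMap S A) := fun q => by
    rw [Algebra.linearMap_apply, ← RingHom.mem_ker, ker_eq, Ideal.mem_span_singleton']
    exact exists_congr fun q' => by rw [LinearMap.lsmul_apply, smul_eq_mul, mul_comm]
  have := rTensor_exact N exact_lsmul surj (1 ⊗ₜ x)
  rw [LinearMap.rTensor_tmul, Algebra.linearMap_apply, map_one] at this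
  rw [this, Set.mem_range, (TensorProduct.lid S N).symm.surjective.exists]
  refine exists_congr fun v => ?_
  rw [← (TensorProduct.lid S N).injective.eq_iff]
  simp

end BaseChange

section ExactModulo

variable {S N N' N'' : Type*} [CommRing S] [AddCommGroup N] [Module S N] [AddCommGroup N']
  [Module S N'] [AddCommGroup N''] [Module S N''] {a : N →ₗ[S] N'} {b : N' →ₗ[S] N''} {e : S}

/-- Exactness of `N / e N → N' / e N' → N'' / e N''`, spelled out on representatives. -/
def ExactModulo (e : S) (a : N →ₗ[S] N') (b : N' →ₗ[S] N'') : Prop :=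
  ∀ x, (∃ v, e • v = b x) ↔ ∃ w v, a w + e • v = x

theorem exactModulo_of_forall (hab : ∀ w, ∃ v, e • v = b (a w))
    (h : ∀ x v, e • v = b x → ∃ w v, a w + e • v = x) : ExactModulo e a b := by
  refine fun x => ⟨fun ⟨v, hv⟩ => h x v hv, ?_⟩
  rintro ⟨w, v, rfl⟩
  obtain ⟨v', hv'⟩ := hab w
  exact ⟨v' + b v, by rw [smul_add, hv', map_add, map_smul]⟩

theorem ExactModulo.baseChange {A : Type*} [CommRing A] [Algebra S A]
    (surj : Function.Surjective (algebraMap S A))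
    (ker_eq : RingHom.ker (algebraMap S A) = Ideal.span {e}) (h : ExactModulo e a b) :
    Function.Exact (a.baseChange A) (b.baseChange A) := by
  refine (exact_baseChange_iff surj).2 fun x => ?_
  rw [one_tmul_eq_zero_iff surj ker_eq, h x]
  refine exists_congr fun w => ?_
  rw [eq_comm, ← sub_eq_zero, ← TensorProduct.tmul_sub, one_tmul_eq_zero_iff surj ker_eq]
  exact exists_congr fun v => by rw [eq_sub_iff_add_eq, add_comm]

theorem exactModulo_of_surjective (hab : Function.Exact a b) (hb : Function.Surjective b) (e : S) :
    ExactModulo e a b := by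
  refine exactModulo_of_forall (fun w => ⟨0, by simp [hab.apply_apply_eq_zero]⟩) fun x v hv => ?_
  obtain ⟨v, rfl⟩ := hb v
  obtain ⟨w, hw⟩ := (hab (x - e • v)).1 (by rw [map_sub, map_smul, hv, sub_self])
  exact ⟨w, v, by rw [hw, sub_add_cancel]⟩

theorem ExactModulo.of_exact_of_isExactPair {f g : S} {N₀ : Type*} [AddCommGroup N₀] [Module S N₀]
    {c : N₀ →ₗ[S] N} (hg : ExactModulo g a b) (hca : Function.Exact c a) (hab : b ∘ₗ a = 0)
    (hfg : f * g = 0) (h : IsExactPair f g N'') : ExactModulo f c a := by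
  refine exactModulo_of_forall (fun w => ⟨0, by simp [hca.apply_apply_eq_zero]⟩) fun x v hv => ?_
  obtain ⟨u, hu⟩ : ∃ u, g • u = b v := by
    refine h.smul_eq_zero_iff.1 ?_
    rw [← map_smul, hv]
    exact LinearMap.congr_fun hab x
  obtain ⟨w, v', rfl⟩ := (hg v).1 ⟨u, hu⟩
  obtain ⟨w', hw'⟩ := (hca (x - f • w)).1 (by
    rw [map_sub, map_smul, ← hv, smul_add, smul_smul, hfg, zero_smul, add_zero, sub_self])
  exact ⟨w', w, by rw [hw', sub_add_cancel]⟩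

end ExactModulo

section Resolution

/-- The sequence `⋯ → X 1 → X 0 → N → 0` with maps `d` and `ε` is exact. -/
structure IsResolution {A : Type*} [CommRing A] {X : ℕ → Type*} [∀ n, AddCommGroup (X n)]
    [∀ n, Module A (X n)] {N : Type*} [AddCommGroup N] [Module A N]
    (d : ∀ n, X (n + 1) →ₗ[A] X n) (ε : X 0 →ₗ[A] N) : Prop where
  exact_d : ∀ n, Function.Exact (d (n + 1)) (d n)
  exact_ε : Function.Exact (d 0) ε
  surjective_ε : Function.Surjective ε

theorem exists_isResolution (A N : Type u) [CommRing A] [AddCommGroup N] [Module A N] :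
    ∃ (X : ℕ → Type u) (_ : ∀ n, AddCommGroup (X n)) (_ : ∀ n, Module A (X n))
      (d : ∀ n, X (n + 1) →ₗ[A] X n) (ε : X 0 →ₗ[A] N),
      (∀ n, Module.Projective A (X n)) ∧ IsResolution d ε := by
  let Y := projectiveResolution (ModuleCat.of A N)
  refine ⟨fun n => Y.complex.X n, inferInstance, inferInstance,
    fun n => (Y.complex.d (n + 1) n).hom, (Y.π.f 0).hom,
    fun n => (IsProjective.iff_projective _).2 (Y.projective n), ⟨fun n => ?_, ?_, ?_⟩⟩
  · exact (ShortComplex.ShortExact.moduleCat_exact_iff_function_exact _).1 (Y.exact_succ n)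
  · exact (ShortComplex.ShortExact.moduleCat_exact_iff_function_exact _).1 Y.exact₀
  · exact (ModuleCat.epi_iff_surjective _).1 inferInstance

namespace IsResolution

variable {S : Type*} [CommRing S] {X : ℕ → Type*} [∀ n, AddCommGroup (X n)] [∀ n, Module S (X n)]
  {N : Type*} [AddCommGroup N] [Module S N] {d : ∀ n, X (n + 1) →ₗ[S] X n} {ε : X 0 →ₗ[S] N}

theorem baseChange_of_exact (hX : IsResolution d ε) (A : Type*) [CommRing A] [Algebra S A]
    (exact_d : ∀ n, Function.Exact ((d (n + 1)).baseChange A) ((d n).baseChange A)) :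
    IsResolution (X := fun n => A ⊗[S] X n) (fun n => (d n).baseChange A) (ε.baseChange A) :=
  ⟨exact_d, lTensor_exact A hX.exact_ε hX.surjective_ε,
    LinearMap.lTensor_surjective A hX.surjective_ε⟩

theorem baseChange_of_flat (hX : IsResolution d ε) (A : Type*) [CommRing A] [Algebra S A]
    [Module.Flat S A] :
    IsResolution (X := fun n => A ⊗[S] X n) (fun n => (d n).baseChange A) (ε.baseChange A) :=
  hX.baseChange_of_exact A fun n => Module.Flat.lTensor_exact A (hX.exact_d n)

theorem baseChange_baseChange (B A : Type*) [CommRing B] [CommRing A] [Algebra S B]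
    [Algebra S A] [Algebra B A] [IsScalarTower S B A]
    (hX : IsResolution (X := fun n => A ⊗[S] X n) (fun n => (d n).baseChange A)
      (ε.baseChange A)) :
    IsResolution (X := fun n => A ⊗[B] (B ⊗[S] X n)) (fun n => ((d n).baseChange B).baseChange A)
      ((ε.baseChange B).baseChange A) where
  exact_d n := exact_baseChange_baseChange B A (hX.exact_d n)
  exact_ε := exact_baseChange_baseChange B A hX.exact_ε
  surjective_ε := by
    have : (ε.baseChange B).baseChange A =
        (AlgebraTensorModule.cancelBaseChange S B A A N).symm.toLinearMap ∘ₗ ε.baseChange A ∘ₗ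
          (AlgebraTensorModule.cancelBaseChange S B A A (X 0)).toLinearMap := by
      ext x
      simp
    rw [this]
    exact (AlgebraTensorModule.cancelBaseChange S B A A N).symm.surjective.comp
      (hX.surjective_ε.comp (AlgebraTensorModule.cancelBaseChange S B A A (X 0)).surjective)

variable [∀ n, Module.Projective S (X n)]

theorem exactModulo_d {f g : S} (hX : IsResolution d ε) (h : IsExactPair f g S)
    (hN : IsExactPair f g N) (n : ℕ) : ExactModulo f (d (n + 1)) (d n) := by
  induction n generalizing f g with
  | zero =>
    exact (exactModulo_of_surjective hX.exact_ε hX.surjective_ε g).of_exact_of_isExactPair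
      (hX.exact_d 0) hX.exact_ε.linearMap_comp_eq_zero h.mul_eq_zero hN
  | succ n ih =>
    exact (ih h.symm hN.symm).of_exact_of_isExactPair (hX.exact_d (n + 1))
      (hX.exact_d n).linearMap_comp_eq_zero h.mul_eq_zero h.of_flat

theorem baseChange_of_isExactPair {f g : S} (hX : IsResolution d ε) (h : IsExactPair f g S)
    (hN : IsExactPair f g N) {A : Type*} [CommRing A] [Algebra S A]
    (surj : Function.Surjective (algebraMap S A))
    (ker_eq : RingHom.ker (algebraMap S A) = Ideal.span {f}) :
    IsResolution (X := fun n => A ⊗[S] X n) (fun n => (d n).baseChange A) (ε.baseChange A) :=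
  hX.baseChange_of_exact A fun n => (hX.exactModulo_d h hN n).baseChange surj ker_eq

end IsResolution

end Resolution

section Periodic

open IsLocalRing

/-- The `2`-periodic sequence `P → A → P → A`, with maps alternating between `d` and
`a ↦ a • z`, is exact. -/
structure IsPeriodic {A P : Type*} [CommRing A] [AddCommGroup P] [Module A P]
    (d : Module.Dual A P) (z : P) : Prop where
  exact_smul_d : Function.Exact (LinearMap.toSpanSingleton A P z) d
  exact_d_smul : Function.Exact d (LinearMap.toSpanSingleton A P z)

theorem IsPeriodic.congr {A P P' : Type*} [CommRing A] [AddCommGroup P] [Module A P]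
    [AddCommGroup P'] [Module A P'] {d : Module.Dual A P} {z : P} (h : IsPeriodic d z)
    (e : P ≃ₗ[A] P') : IsPeriodic (Module.Dual.congr e d) (e z) where
  exact_smul_d := Function.Exact.of_ladder_linearEquiv_of_exact (e₁ := .refl A A) (e₂ := e)
    (e₃ := .refl A A) (by ext; simp) (by ext; simp) h.exact_smul_d
  exact_d_smul := Function.Exact.of_ladder_linearEquiv_of_exact (e₁ := e) (e₂ := .refl A A)
    (e₃ := e) (by ext; simp) (by ext; simp) h.exact_d_smul

section

variable {S P A : Type*} [CommRing S] [AddCommGroup P] [Module S P] [CommRing A] [Algebra S A]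
  {d : Module.Dual S P} {z : P}

theorem isPeriodic_baseChange_iff (surj : Function.Surjective (algebraMap S A)) :
    IsPeriodic (d.baseChange A) ((1 : A) ⊗ₜ[S] z) ↔
      (∀ p, algebraMap S A (d p) = 0 ↔ ∃ q : S, (1 : A) ⊗ₜ[S] (q • z) = 1 ⊗ₜ p) ∧
        ∀ q : S, (1 : A) ⊗ₜ[S] (q • z) = 0 ↔ ∃ p, algebraMap S A (d p) = algebraMap S A q := by
  have smul_tmul (q : S) : algebraMap S A q • (1 : A) ⊗ₜ[S] z = 1 ⊗ₜ (q • z) := by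
    rw [algebraMap_smul, TensorProduct.tmul_smul]
  refine (⟨fun h => ⟨h.1, h.2⟩, fun h => ⟨h.1, h.2⟩⟩ : _ ↔ _ ∧ _).trans ?_
  simp only [Function.Exact, (TensorProduct.mk_surjective S P A surj).forall, surj.forall,
    Set.mem_range, (TensorProduct.mk_surjective S P A surj).exists, surj.exists,
    TensorProduct.mk_apply, LinearMap.toSpanSingleton_apply, smul_tmul,
    dual_baseChange_one_tmul]

theorem IsPeriodic.algebraMap_apply_eq_zero (surj : Function.Surjective (algebraMap S A))
    (h : IsPeriodic (d.baseChange A) ((1 : A) ⊗ₜ[S] z)) : algebraMap S A (d z) = 0 :=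
  (((isPeriodic_baseChange_iff surj).1 h).1 z).2 ⟨1, by rw [one_smul]⟩

end

variable {Q P : Type*} [CommRing Q] [IsLocalRing Q] [AddCommGroup P] [Module Q P] {f g : Q}
  {d : Module.Dual Q P} {z : P}

theorem IsPeriodicForm.isPeriodic_smul (hd : IsPeriodicForm f g d z) (h : IsExactPair f g Q) :
    IsPeriodic d (g • z) := by
  refine ⟨fun p => ⟨hd.exists_smul_eq p, ?_⟩,
    fun q => ⟨fun hq => hd.range_eq.ge (hd.mem_maximalIdeal q hq), ?_⟩⟩
  · rintro ⟨q, rfl⟩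
    simp [hd.apply_eq, h.symm.mul_eq_zero]
  · rintro ⟨p, rfl⟩
    rw [LinearMap.toSpanSingleton_apply, smul_comm, hd.apply_smul_comm, hd.apply_eq, smul_smul,
      h.symm.mul_eq_zero, zero_smul]

theorem IsPeriodicForm.isPeriodic_baseChange (hd : IsPeriodicForm f g d z)
    (h : IsExactPair f g Q) (hg : g ∈ maximalIdeal Q) {A : Type*} [CommRing A] [Algebra Q A]
    (surj : Function.Surjective (algebraMap Q A))
    (ker_eq : RingHom.ker (algebraMap Q A) = Ideal.span {f}) :
    IsPeriodic (d.baseChange A) ((1 : A) ⊗ₜ[Q] z) := by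
  have algebraMap_f : algebraMap Q A f = 0 := by
    rw [← RingHom.mem_ker, ker_eq]
    exact Ideal.mem_span_singleton_self f
  have f_smul (p : P) : (1 : A) ⊗ₜ[Q] (f • p) = 0 :=
    (one_tmul_eq_zero_iff surj ker_eq).2 ⟨p, rfl⟩
  refine (isPeriodic_baseChange_iff surj).2
    ⟨fun p => ⟨fun hp => ?_, ?_⟩, fun q => ⟨fun hq => ?_, ?_⟩⟩
  · rw [← RingHom.mem_ker, ker_eq, Ideal.mem_span_singleton'] at hp
    obtain ⟨q, hq⟩ := hp
    obtain ⟨q', hq'⟩ := hd.exists_smul_eq (p - q • z) (by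
      rw [map_sub, map_smul, hd.apply_eq, ← hq, smul_eq_mul, sub_self])
    exact ⟨q' * g + q, by rw [add_smul, mul_smul, hq', sub_add_cancel]⟩
  · rintro ⟨q, hq⟩
    have := congrArg (d.baseChange A) hq
    simpa [hd.apply_eq, mul_smul, algebraMap_f, Algebra.smul_def, eq_comm] using this
  · obtain ⟨p, hp⟩ := (one_tmul_eq_zero_iff surj ker_eq).1 hq
    obtain ⟨u, hu⟩ : ∃ u, g • u = q - d p := by
      refine h.smul_eq_zero_iff.1 ?_
      have := congrArg d hp
      rw [map_smul, map_smul, hd.apply_eq] at this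
      rw [smul_sub, this, smul_eq_mul, smul_eq_mul, mul_comm, sub_self]
    obtain ⟨p', hp'⟩ := hd.range_eq.ge (Ideal.mul_mem_right u _ hg)
    exact ⟨p' + p, by rw [map_add, hp', ← smul_eq_mul, hu, sub_add_cancel]⟩
  · rintro ⟨p, hp⟩
    rw [TensorProduct.tmul_smul, ← algebraMap_smul A q, ← hp, algebraMap_smul,
      ← TensorProduct.tmul_smul, hd.apply_smul_comm, hd.apply_eq, f_smul]

end Periodic

section Stage

theorem exists_lift {B N N' V : Type*} [CommRing B] [AddCommGroup N] [Module B N]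
    [AddCommGroup N'] [Module B N'] [AddCommGroup V] [Module B V] [Module.Projective B V]
    {a : N →ₗ[B] N'} {h : V →ₗ[B] N'} (hh : ∀ v, ∃ y, a y = h v) : ∃ l : V →ₗ[B] N, a ∘ₗ l = h := by
  obtain ⟨l, hl⟩ := Module.projective_lifting_property a.rangeRestrict
    (h.codRestrict (LinearMap.range a) hh) a.surjective_rangeRestrict
  exact ⟨l, LinearMap.ext fun v => congrArg Subtype.val (LinearMap.congr_fun hl v)⟩

variable {B : Type*} [CommRing B] {Y : ℕ → Type u} [∀ n, AddCommGroup (Y n)] [∀ n, Module B (Y n)]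
  {dY : ∀ n, Y (n + 1) →ₗ[B] Y n} {φ : B} {n : ℕ}

variable (dY φ n) in
/-- Two consecutive maps `Y (n + 1) × X → X' → X` of a sequence whose square is `φ` times the
second projection, with a map `lam` from which the next one can be built. The sequence grows like
the Eisenbud–Shamash construction of resolutions, `Y (n + 1)` being added at step `n`. -/
structure Stage where
  X : Type u
  X' : Type u
  [addCommGroup : AddCommGroup X]
  [module : Module B X]
  [addCommGroup' : AddCommGroup X']
  [module' : Module B X']
  [projective : Module.Projective B X]
  [projective' : Module.Projective B X']
  D : X' →ₗ[B] X
  E : Y (n + 1) × X →ₗ[B] X'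
  lam : X' →ₗ[B] Y (n + 1)
  pr : X' →ₗ[B] Y n
  D_E : ∀ v, D (E v) = φ • v.2
  E_lam : ∀ x, E (lam x, D x) = φ • x
  pr_E : ∀ y, pr (E (y, 0)) = dY n y
  E_d : ∀ y, E (dY (n + 1) y, 0) = 0
  exists_d_eq : ∀ v, ∃ y, dY (n + 1) y = φ • v.1 - lam (E v)

namespace Stage

attribute [instance] addCommGroup module addCommGroup' module' projective projective'

variable (s : Stage dY φ n)

/-- The map following `E`. -/
def nextE : Y (n + 2) × s.X' →ₗ[B] Y (n + 1) × s.X :=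
  ((dY (n + 1)).coprod s.lam).prod (s.D ∘ₗ LinearMap.snd B _ _)

theorem nextE_apply (v : Y (n + 2) × s.X') :
    s.nextE v = (dY (n + 1) v.1 + s.lam v.2, s.D v.2) :=
  rfl

theorem E_nextE (v : Y (n + 2) × s.X') : s.E (s.nextE v) = φ • v.2 := by
  have : s.nextE v = (dY (n + 1) v.1, 0) + (s.lam v.2, s.D v.2) := by simp [nextE_apply]
  rw [this, map_add, s.E_d, s.E_lam, zero_add]

section Exact

variable (A : Type*) [CommRing A] [Algebra B A]

/-- Exactness of `D` and `E` after base change to a quotient `A` of `B`, the latter up to the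
first component, on representatives. -/
structure IsExactOver : Prop where
  exists_E_eq : ∀ x, (1 : A) ⊗ₜ[B] s.D x = 0 → ∃ v, (1 : A) ⊗ₜ[B] s.E v = 1 ⊗ₜ x
  exists_D_eq : ∀ v, (1 : A) ⊗ₜ[B] s.E v = 0 → ∃ x, (1 : A) ⊗ₜ[B] s.D x = 1 ⊗ₜ v.2

variable {A} {s}

theorem smul_tmul_eq_zero (hφ : algebraMap B A φ = 0) {N : Type*} [AddCommGroup N] [Module B N]
    (x : N) : (1 : A) ⊗ₜ[B] (φ • x) = 0 := by
  rw [TensorProduct.tmul_smul, ← algebraMap_smul A φ, hφ, zero_smul]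

theorem IsExactOver.exact (surj : Function.Surjective (algebraMap B A))
    (hφ : algebraMap B A φ = 0) (hs : s.IsExactOver A) :
    Function.Exact (s.E.baseChange A) (s.D.baseChange A) := by
  refine (exact_baseChange_iff surj).2 fun x => ⟨hs.exists_E_eq x, ?_⟩
  rintro ⟨v, hv⟩
  have := congrArg (s.D.baseChange A) hv
  rw [LinearMap.baseChange_tmul, LinearMap.baseChange_tmul, s.D_E, smul_tmul_eq_zero hφ] at this
  exact this.symm

theorem IsExactOver.exists_nextE_eq (surj : Function.Surjective (algebraMap B A))
    (hφ : algebraMap B A φ = 0) (hs : s.IsExactOver A)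
    (hY : Function.Exact ((dY (n + 1)).baseChange A) ((dY n).baseChange A))
    (v : Y (n + 1) × s.X) (hv : (1 : A) ⊗ₜ[B] s.E v = 0) :
    ∃ v', (1 : A) ⊗ₜ[B] s.nextE v' = 1 ⊗ₜ v := by
  obtain ⟨x, hx⟩ := hs.exists_D_eq v hv
  have tmul_v : (1 : A) ⊗ₜ[B] v = 1 ⊗ₜ (v.1 - s.lam x, (0 : s.X)) + 1 ⊗ₜ s.nextE (0, x) := by
    have := congrArg ((LinearMap.inr B (Y (n + 1)) s.X).baseChange A) hx
    simp only [LinearMap.baseChange_tmul, LinearMap.inr_apply] at this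
    conv_lhs => rw [← Prod.fst_add_snd v, TensorProduct.tmul_add, ← this, ← TensorProduct.tmul_add]
    rw [← TensorProduct.tmul_add]
    simp [nextE_apply]
  have tmul_d : (1 : A) ⊗ₜ[B] dY n (v.1 - s.lam x) = 0 := by
    have := congrArg (s.E.baseChange A) tmul_v
    rw [map_add, LinearMap.baseChange_tmul, LinearMap.baseChange_tmul, LinearMap.baseChange_tmul,
      hv, s.E_nextE, smul_tmul_eq_zero hφ, add_zero] at this
    simpa [s.pr_E] using congrArg (s.pr.baseChange A) this.symm
  obtain ⟨y, hy⟩ := ((exact_baseChange_iff surj).1 hY _).1 tmul_d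
  have := congrArg ((LinearMap.inl B (Y (n + 1)) s.X).baseChange A) hy
  simp only [LinearMap.baseChange_tmul, LinearMap.inl_apply] at this
  refine ⟨(y, x), ?_⟩
  rw [tmul_v, ← this, ← TensorProduct.tmul_add]
  simp [nextE_apply]

theorem IsExactOver.exists_E_eq_of_nextE (hs : s.IsExactOver A) (v : Y (n + 2) × s.X')
    (hv : (1 : A) ⊗ₜ[B] s.nextE v = 0) : ∃ x, (1 : A) ⊗ₜ[B] s.E x = 1 ⊗ₜ v.2 := by
  have := congrArg ((LinearMap.snd B (Y (n + 1)) s.X).baseChange A) hv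
  exact hs.exists_E_eq v.2 (by simpa [nextE_apply] using this)

end Exact

section Next

variable [∀ n, Module.Projective B (Y n)]

theorem exists_lam :
    ∃ l : Y (n + 1) × s.X →ₗ[B] Y (n + 2),
      dY (n + 1) ∘ₗ l = φ • LinearMap.fst B _ _ - s.lam ∘ₗ s.E :=
  exists_lift s.exists_d_eq

variable (hY : ∀ n, Function.Exact (dY (n + 1)) (dY n))

/-- The stage formed by `E` and `nextE`. -/
noncomputable def next : Stage dY φ (n + 1) where
  X := s.X'
  X' := Y (n + 1) × s.X
  D := s.E
  E := s.nextE
  lam := s.exists_lam.choose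
  pr := LinearMap.fst B _ _
  D_E := s.E_nextE
  E_lam v := by
    have := LinearMap.congr_fun s.exists_lam.choose_spec v
    simp only [LinearMap.comp_apply, LinearMap.sub_apply, LinearMap.smul_apply,
      LinearMap.fst_apply] at this
    rw [nextE_apply, this, sub_add_cancel, s.D_E]
    rfl
  pr_E y := by simp [nextE_apply]
  E_d y := by simp [nextE_apply, (hY (n + 1)).apply_apply_eq_zero]
  exists_d_eq v := by
    have := LinearMap.congr_fun s.exists_lam.choose_spec (s.nextE v)
    simp only [LinearMap.comp_apply, LinearMap.sub_apply, LinearMap.smul_apply,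
      LinearMap.fst_apply, E_nextE] at this
    refine (hY (n + 1) _).1 ?_
    rw [map_sub, this, nextE_apply, map_smul, map_smul, smul_add]
    abel

theorem IsExactOver.next {s : Stage dY φ n} {A : Type*} [CommRing A] [Algebra B A]
    (surj : Function.Surjective (algebraMap B A)) (hφ : algebraMap B A φ = 0)
    (hs : s.IsExactOver A)
    (hYA : Function.Exact ((dY (n + 1)).baseChange A) ((dY n).baseChange A)) :
    (s.next hY).IsExactOver A :=
  ⟨hs.exists_nextE_eq surj hφ hYA, hs.exists_E_eq_of_nextE⟩

end Next

end Stage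

section Base

variable {B P : Type u} [CommRing B] [AddCommGroup P] [Module B P] {Y : ℕ → Type u}
  [∀ n, AddCommGroup (Y n)] [∀ n, Module B (Y n)] [∀ n, Module.Projective B (Y n)]
  {dY : ∀ n, Y (n + 1) →ₗ[B] Y n} {ε : Y 0 →ₗ[B] P} {d : Module.Dual B P}

theorem IsResolution.exists_koszul_lift (hY : IsResolution dY ε)
    (hd : ∀ p p', d p • p' = d p' • p) (y : Y 0) :
    ∃ l : Y 0 →ₗ[B] Y 1, dY 0 ∘ₗ l = d (ε y) • .id - (d ∘ₗ ε).smulRight y :=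
  exists_lift fun x => (hY.exact_ε _).1 (by simp [hd (ε y) (ε x)])

namespace Stage

/-- The stage `Y 1 × B → Y 0 → B` with maps `(v, q) ↦ dY 0 v + q • y` and `d ∘ ε`. -/
noncomputable def base (hY : IsResolution dY ε) (hd : ∀ p p', d p • p' = d p' • p) (y : Y 0) :
    Stage dY (d (ε y)) 0 where
  X := B
  X' := Y 0
  D := d ∘ₗ ε
  E := (dY 0).coprod (LinearMap.toSpanSingleton B _ y)
  lam := (hY.exists_koszul_lift hd y).choose
  pr := .id
  D_E v := by simp [hY.exact_ε.apply_apply_eq_zero, mul_comm]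
  E_lam x := by
    have := LinearMap.congr_fun (hY.exists_koszul_lift hd y).choose_spec x
    simp only [LinearMap.comp_apply] at this
    simp [this]
  pr_E y := by simp
  E_d y := by simp [(hY.exact_d 0).apply_apply_eq_zero]
  exists_d_eq v := by
    have := LinearMap.congr_fun (hY.exists_koszul_lift hd y).choose_spec
    simp only [LinearMap.comp_apply] at this
    refine (hY.exact_d 0 _).1 ?_
    simp [this, hY.exact_ε.apply_apply_eq_zero]

theorem isExactOver_base {hY : IsResolution dY ε} {hd : ∀ p p', d p • p' = d p' • p} {y : Y 0}
    {A : Type*} [CommRing A] [Algebra B A] (surj : Function.Surjective (algebraMap B A))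
    (hdA : IsPeriodic (d.baseChange A) ((1 : A) ⊗ₜ ε y))
    (hYA : Function.Exact ((dY 0).baseChange A) (ε.baseChange A)) :
    (base hY hd y).IsExactOver A := by
  obtain ⟨hdP, hdB⟩ := (isPeriodic_baseChange_iff surj).1 hdA
  constructor
  · intro (x : Y 0) (hx : (1 : A) ⊗ₜ[B] d (ε x) = 0)
    rw [← (AlgebraTensorModule.rid B A A).map_eq_zero_iff, AlgebraTensorModule.rid_tmul,
      ← Algebra.algebraMap_eq_smul_one] at hx
    obtain ⟨q, hq⟩ := (hdP _).1 hx
    obtain ⟨v, hv⟩ := ((exact_baseChange_iff surj).1 hYA (x - q • y)).1 (by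
      rw [map_sub, map_smul, TensorProduct.tmul_sub, hq, sub_self])
    refine ⟨(v, q), ?_⟩
    change (1 : A) ⊗ₜ[B] (dY 0 v + q • y) = 1 ⊗ₜ x
    rw [TensorProduct.tmul_add, hv, ← TensorProduct.tmul_add, sub_add_cancel]
  · intro (v : Y 1 × B) (hv : (1 : A) ⊗ₜ[B] (dY 0 v.1 + v.2 • y) = 0)
    have := congrArg (ε.baseChange A) hv
    rw [LinearMap.baseChange_tmul, map_add, hY.exact_ε.apply_apply_eq_zero, zero_add, map_smul,
      map_zero, hdB] at this
    obtain ⟨p, hp⟩ := this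
    obtain ⟨x, rfl⟩ := hY.surjective_ε p
    refine ⟨x, (AlgebraTensorModule.rid B A A).injective ?_⟩
    change AlgebraTensorModule.rid B A A (1 ⊗ₜ d (ε x)) =
      AlgebraTensorModule.rid B A A (1 ⊗ₜ[B] v.2)
    rwa [AlgebraTensorModule.rid_tmul, AlgebraTensorModule.rid_tmul,
      ← Algebra.algebraMap_eq_smul_one, ← Algebra.algebraMap_eq_smul_one]

/-- The iterated stages starting with `base`. -/
noncomputable def tower (hY : IsResolution dY ε) (hd : ∀ p p', d p • p' = d p' • p) (y : Y 0) :
    ∀ n, Stage dY (d (ε y)) n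
  | 0 => base hY hd y
  | n + 1 => (tower hY hd y n).next hY.exact_d

theorem isExactOver_tower {hY : IsResolution dY ε} {hd : ∀ p p', d p • p' = d p' • p} {y : Y 0}
    {A : Type*} [CommRing A] [Algebra B A] (surj : Function.Surjective (algebraMap B A))
    (hdA : IsPeriodic (d.baseChange A) ((1 : A) ⊗ₜ ε y))
    (hYA : IsResolution (X := fun n => A ⊗[B] Y n) (fun n => (dY n).baseChange A)
      (ε.baseChange A)) (n : ℕ) :
    (tower hY hd y n).IsExactOver A := by
  induction n with
  | zero => exact isExactOver_base surj hdA hYA.exact_ε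
  | succ n ih => exact ih.next hY.exact_d surj (hdA.algebraMap_apply_eq_zero surj) (hYA.exact_d n)

end Stage

theorem exact_baseChange_rid {V A K : Type*} [AddCommGroup V] [Module B V] [CommRing A]
    [Algebra B A] [AddCommGroup K] [Module A K] {δ : Module.Dual B V} {π : A →ₗ[A] K}
    (h : Function.Exact (δ.baseChange A) π) :
    Function.Exact (LinearMap.baseChange A δ)
      (π ∘ₗ (AlgebraTensorModule.rid B A A).toLinearMap) := by
  refine Function.Exact.of_ladder_linearEquiv_of_exact (e₁ := .refl A _)
    (e₂ := (AlgebraTensorModule.rid B A A).symm) (e₃ := .refl A K) ?_ ?_ h <;>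
  · ext
    simp [TensorProduct.smul_tmul]

theorem exists_forall_isResolution (hY : IsResolution dY ε) (hd : ∀ p p', d p • p' = d p' • p)
    (w : P) :
    ∃ (F : ℕ → Type u) (_ : ∀ n, AddCommGroup (F n)) (_ : ∀ n, Module B (F n))
      (D : ∀ n, F (n + 1) →ₗ[B] F n), (∀ n, Module.Projective B (F n)) ∧
      ∀ (A : Type u) [CommRing A] [Algebra B A], Function.Surjective (algebraMap B A) →
        IsPeriodic (d.baseChange A) ((1 : A) ⊗ₜ[B] w) →
        IsResolution (X := fun n => A ⊗[B] Y n) (fun n => (dY n).baseChange A)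
          (ε.baseChange A) →
        ∀ (K : Type u) [AddCommGroup K] [Module A K] (π : A →ₗ[A] K),
          Function.Exact (d.baseChange A) π → Function.Surjective π →
          ∃ ε' : A ⊗[B] F 0 →ₗ[A] K,
            IsResolution (X := fun n => A ⊗[B] F n) (fun n => (D n).baseChange A) ε' := by
  obtain ⟨y, rfl⟩ := hY.surjective_ε w
  refine ⟨fun n => (Stage.tower hY hd y n).X, inferInstance, inferInstance,
    fun n => (Stage.tower hY hd y n).D, inferInstance, fun A _ _ surj hdA hYA K _ _ π hπ hπ' => ?_⟩
  refine ⟨π ∘ₗ (AlgebraTensorModule.rid B A A).toLinearMap, fun n => ?_, ?_, ?_⟩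
  · exact (Stage.isExactOver_tower surj hdA hYA n).exact surj
      (hdA.algebraMap_apply_eq_zero surj)
  · refine exact_baseChange_rid (δ := d ∘ₗ ε) ?_
    have : Module.Dual.baseChange A (d ∘ₗ ε) = d.baseChange A ∘ₗ ε.baseChange A := by
      ext x
      simp
    rw [this]
    exact hYA.surjective_ε.comp_exact_iff_exact.2 hπ
  · exact hπ'.comp (AlgebraTensorModule.rid B A A).surjective

end Base

end Stage

section Polynomial

open IsLocalRing

variable {Q P : Type u} [CommRing Q] [AddCommGroup P] [Module Q P]

theorem exists_polynomial_lift {J : Ideal Q} {z : P} (hz : z ∈ J • (⊤ : Submodule Q P)) :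
    ∃ w : MvPolynomial J Q ⊗[Q] P, ∀ (A : Type u) [CommRing A] [Algebra Q A]
      [Algebra (MvPolynomial J Q) A] [IsScalarTower Q (MvPolynomial J Q) A] (r : Q),
      (∀ j : J, algebraMap (MvPolynomial J Q) A (.X j) = algebraMap Q A (r * j)) →
        AlgebraTensorModule.cancelBaseChange Q (MvPolynomial J Q) A A P (1 ⊗ₜ w) =
          1 ⊗ₜ (r • z) := by
  induction hz using Submodule.smul_induction_on' with
  | smul j hj p _ =>
    refine ⟨.X ⟨j, hj⟩ ⊗ₜ p, fun A _ _ _ _ r hr => ?_⟩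
    rw [AlgebraTensorModule.cancelBaseChange_tmul, Algebra.smul_def, hr, mul_one, smul_smul,
      Algebra.algebraMap_eq_smul_one, TensorProduct.smul_tmul]
  | add p _ p' _ ih ih' =>
    obtain ⟨w, hw⟩ := ih
    obtain ⟨w', hw'⟩ := ih'
    refine ⟨w + w', fun A _ _ _ _ r hr => ?_⟩
    rw [TensorProduct.tmul_add, map_add, hw A r hr, hw' A r hr, smul_add, TensorProduct.tmul_add]

variable {d : Module.Dual Q P}

theorem baseChange_apply_smul_comm (hd : ∀ p p', d p • p' = d p' • p) (B : Type*) [CommRing B]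
    [Algebra Q B] (x y : B ⊗[Q] P) : d.baseChange B x • y = d.baseChange B y • x := by
  induction x using TensorProduct.induction_on with
  | zero => simp
  | add x x' hx hx' => rw [map_add, add_smul, hx, hx', smul_add]
  | tmul b p =>
    induction y using TensorProduct.induction_on with
    | zero => simp
    | add y y' hy hy' => rw [smul_add, hy, hy', map_add, add_smul]
    | tmul b' p' =>
      have smul_tmul_eq (p p' : P) (b b' : B) :
          (d p • b) • b' ⊗ₜ[Q] p' = (b * b') ⊗ₜ (d p • p') := by
        rw [TensorProduct.tmul_smul, TensorProduct.smul_tmul', TensorProduct.smul_tmul',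
          smul_assoc, smul_eq_mul]
      rw [Module.Dual.baseChange_apply_tmul, Module.Dual.baseChange_apply_tmul, smul_tmul_eq,
        smul_tmul_eq, hd, mul_comm]

theorem IsPeriodic.of_baseChange {B A : Type*} [CommRing B] [CommRing A] [Algebra Q B]
    [Algebra Q A] [Algebra B A] [IsScalarTower Q B A] {w : B ⊗[Q] P} {z : P}
    (hw : AlgebraTensorModule.cancelBaseChange Q B A A P (1 ⊗ₜ w) = 1 ⊗ₜ z)
    (h : IsPeriodic (d.baseChange A) (1 ⊗ₜ z)) :
    IsPeriodic ((d.baseChange B).baseChange A) (1 ⊗ₜ w) := by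
  rw [Module.Dual.baseChange_baseChange, ← (AlgebraTensorModule.cancelBaseChange Q B A A
    P).symm_apply_apply (1 ⊗ₜ w), hw]
  exact h.congr (AlgebraTensorModule.cancelBaseChange Q B A A P).symm

theorem IsPeriodic.baseChange_self {z : P} (h : IsPeriodic d z) :
    IsPeriodic (d.baseChange Q) ((1 : Q) ⊗ₜ[Q] z) := by
  have congr_lid : Module.Dual.congr (TensorProduct.lid Q P).symm d = d.baseChange Q := by
    ext
    simp
  simpa only [congr_lid, TensorProduct.lid_symm_apply] using h.congr (TensorProduct.lid Q P).symm

theorem exact_baseChange_residueField [IsLocalRing Q] (range_d : LinearMap.range d = maximalIdeal Q)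
    {A : Type*} [CommRing A] [IsLocalRing A] [Algebra Q A]
    (surj : Function.Surjective (algebraMap Q A)) :
    Function.Exact (d.baseChange A) (Algebra.linearMap A (ResidueField A)) := by
  have : IsLocalHom (algebraMap Q A) := .of_surjective _ surj
  have algebraMap_mem_iff (q : Q) : algebraMap Q A q ∈ maximalIdeal A ↔ q ∈ maximalIdeal Q := by
    rw [← maximalIdeal_comap (algebraMap Q A), Ideal.mem_comap]
  refine surj.forall.2 fun q => ?_
  rw [Algebra.linearMap_apply, ResidueField.algebraMap_eq, residue_eq_zero_iff, Set.mem_range,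
    (TensorProduct.mk_surjective Q P A surj).exists]
  simp only [TensorProduct.mk_apply, dual_baseChange_one_tmul]
  constructor
  · intro hq
    obtain ⟨p, rfl⟩ := range_d.ge ((algebraMap_mem_iff q).1 hq)
    exact ⟨p, rfl⟩
  · rintro ⟨p, hp⟩
    exact hp ▸ (algebraMap_mem_iff _).2 (range_d.le (LinearMap.mem_range_self d p))

theorem exists_forall_isResolution_residueField [IsLocalRing Q] {J : Ideal Q} {z : P}
    (hd : ∀ p p', d p • p' = d p' • p) (range_d : LinearMap.range d = maximalIdeal Q)
    (hz : z ∈ J • (⊤ : Submodule Q P)) {Y : ℕ → Type u} [∀ n, AddCommGroup (Y n)]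
    [∀ n, Module Q (Y n)] [∀ n, Module.Projective Q (Y n)] {dY : ∀ n, Y (n + 1) →ₗ[Q] Y n}
    {ε : Y 0 →ₗ[Q] P} (hY : IsResolution dY ε) :
    ∃ (F : ℕ → Type u) (_ : ∀ n, AddCommGroup (F n)) (_ : ∀ n, Module (MvPolynomial J Q) (F n))
      (D : ∀ n, F (n + 1) →ₗ[MvPolynomial J Q] F n),
      (∀ n, Module.Projective (MvPolynomial J Q) (F n)) ∧
      ∀ (A : Type u) [CommRing A] [IsLocalRing A] [Algebra Q A] [Algebra (MvPolynomial J Q) A]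
        [IsScalarTower Q (MvPolynomial J Q) A] (r : Q),
        (∀ j : J, algebraMap (MvPolynomial J Q) A (.X j) = algebraMap Q A (r * j)) →
        Function.Surjective (algebraMap Q A) →
        IsPeriodic (d.baseChange A) ((1 : A) ⊗ₜ[Q] (r • z)) →
        IsResolution (X := fun n => A ⊗[Q] Y n) (fun n => (dY n).baseChange A)
          (ε.baseChange A) →
        ∃ ε' : A ⊗[MvPolynomial J Q] F 0 →ₗ[A] ResidueField A,
          IsResolution (X := fun n => A ⊗[MvPolynomial J Q] F n) (fun n => (D n).baseChange A)
            ε' := by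
  obtain ⟨w, hw⟩ := exists_polynomial_lift hz
  obtain ⟨F, _, _, D, projective_F, hF⟩ := exists_forall_isResolution
    (hY.baseChange_of_flat (MvPolynomial J Q))
    (baseChange_apply_smul_comm hd (MvPolynomial J Q)) w
  refine ⟨F, _, _, D, projective_F, fun A _ _ _ _ _ r hr surj periodic hYA => ?_⟩
  refine hF A ?_ (periodic.of_baseChange (hw A r hr))
    (hYA.baseChange_baseChange (MvPolynomial J Q) A) (ResidueField A)
    (Algebra.linearMap A (ResidueField A)) ?_ residue_surjective
  · rw [IsScalarTower.algebraMap_eq Q (MvPolynomial J Q) A] at surj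
    exact .of_comp surj
  · rw [Module.Dual.baseChange_baseChange]
    exact (AlgebraTensorModule.cancelBaseChange Q _ A A P).surjective.comp_exact_iff_exact.2
      (exact_baseChange_residueField range_d surj)

end Polynomial

section Tor

namespace IsResolution

section

variable {A : Type u} [CommRing A] {X : ℕ → Type u} [∀ n, AddCommGroup (X n)]
  [∀ n, Module A (X n)] {N : Type u} [AddCommGroup N] [Module A N]
  {d : ∀ n, X (n + 1) →ₗ[A] X n} {ε : X 0 →ₗ[A] N}

/-- The chain complex underlying a resolution. -/
noncomputable def complex (h : IsResolution d ε) : ChainComplex (ModuleCat.{u} A) ℕ :=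
  ChainComplex.of (fun n => ModuleCat.of A (X n)) (fun n => ModuleCat.ofHom (d n)) fun n => by
    ext x
    exact (h.exact_d n).apply_apply_eq_zero x

theorem complex_d (h : IsResolution d ε) (n : ℕ) :
    h.complex.d (n + 1) n = ModuleCat.ofHom (d n) :=
  ChainComplex.of_d (fun n => ModuleCat.of A (X n)) (fun n => ModuleCat.ofHom (d n)) n

theorem exactAt_complex_succ (h : IsResolution d ε) (n : ℕ) : h.complex.ExactAt (n + 1) := by
  rw [HomologicalComplex.exactAt_iff' _ (n + 1 + 1) (n + 1) n (by simp) (by simp),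
    ShortComplex.ShortExact.moduleCat_exact_iff_function_exact]
  simp only [HomologicalComplex.sc', HomologicalComplex.shortComplexFunctor', complex_d]
  exact h.exact_d n

/-- The augmentation of the chain complex underlying a resolution. -/
noncomputable def augmentation (h : IsResolution d ε) :
    h.complex ⟶ (ChainComplex.single₀ _).obj (ModuleCat.of A N) :=
  (h.complex.toSingle₀Equiv _).symm ⟨ModuleCat.ofHom ε, by
    rw [complex_d]
    ext x
    exact h.exact_ε.apply_apply_eq_zero x⟩

theorem augmentation_f_zero (h : IsResolution d ε) :
    h.augmentation.f 0 = ModuleCat.ofHom ε :=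
  ChainComplex.toSingle₀Equiv_symm_apply_f_zero _ _

theorem quasiIso_augmentation (h : IsResolution d ε) : QuasiIso h.augmentation := by
  refine ⟨fun n => ?_⟩
  cases n with
  | zero =>
    rw [ChainComplex.quasiIsoAt₀_iff, ShortComplex.quasiIso_iff_of_zeros' _ rfl rfl rfl]
    constructor
    · rw [ShortComplex.ShortExact.moduleCat_exact_iff_function_exact]
      simp only [HomologicalComplex.shortComplexFunctor', complex_d]
      erw [augmentation_f_zero]
      exact h.exact_ε
    · simp only [HomologicalComplex.shortComplexFunctor']
      erw [augmentation_f_zero]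
      exact (ModuleCat.epi_iff_surjective _).2 h.surjective_ε
  | succ n =>
    rw [quasiIsoAt_iff_exactAt' _ _ (ChainComplex.exactAt_succ_single_obj _ _)]
    exact h.exactAt_complex_succ n

/-- A resolution by projective modules as a `ProjectiveResolution`. -/
noncomputable def toProjectiveResolution (h : IsResolution d ε)
    [∀ n, Module.Projective A (X n)] : ProjectiveResolution (ModuleCat.of A N) where
  complex := h.complex
  projective n := (IsProjective.iff_projective (X n)).1 inferInstance
  π := h.augmentation
  quasiIso := h.quasiIso_augmentation

end

end IsResolution

section

variable (S A : Type u) {B : Type u} [CommRing S] [CommRing B] [CommRing A] [Algebra S B]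
  [Algebra S A] [Algebra B A] (M : Type u) [AddCommGroup M] [Module S M] [Module B M] [Module A M]
  [IsScalarTower S B M] [IsScalarTower S A M] [IsScalarTower B A M]

/-- The isomorphism of `S`-modules `M ⊗[A] (A ⊗[B] N) ≅ M ⊗[B] N`. -/
noncomputable def cancelBaseChangeIso (N : Type u) [AddCommGroup N] [Module B N] :
    (ModuleCat.restrictScalars (algebraMap S A)).obj
      (((MonoidalCategory.tensoringLeft (ModuleCat.{u} A)).obj (ModuleCat.of A M)).obj
        (ModuleCat.of A (A ⊗[B] N))) ≅ ModuleCat.of S (M ⊗[B] N) :=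
  let e : ((ModuleCat.restrictScalars (algebraMap S A)).obj
      (ModuleCat.of A (M ⊗[A] (A ⊗[B] N)))) ≃ₗ[S] ModuleCat.of S (M ⊗[B] N) :=
    { (AlgebraTensorModule.cancelBaseChange B A A M N).toAddEquiv with
      map_smul' := fun s x => ((AlgebraTensorModule.cancelBaseChange B A A M N).map_smul
        (algebraMap S A s) x).trans (algebraMap_smul A s _) }
  e.toModuleIso

variable {N N' : Type u} [AddCommGroup N] [Module B N] [AddCommGroup N'] [Module B N']

theorem commSq_cancelBaseChangeIso (a : N →ₗ[B] N') :
    CommSq (cancelBaseChangeIso S A M N).hom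
      ((ModuleCat.restrictScalars (algebraMap S A)).map
        (((MonoidalCategory.tensoringLeft (ModuleCat.{u} A)).obj (ModuleCat.of A M)).map
          (ModuleCat.ofHom (a.baseChange A))))
      (ModuleCat.ofHom ((a.lTensor M).restrictScalars S)) (cancelBaseChangeIso S A M N').hom := by
  have comp_eq : AlgebraTensorModule.lTensor A M a ∘ₗ
        (AlgebraTensorModule.cancelBaseChange B A A M N).toLinearMap =
      (AlgebraTensorModule.cancelBaseChange B A A M N').toLinearMap ∘ₗ
        (a.baseChange A).lTensor M := by
    ext
    simp
  exact ⟨ModuleCat.hom_ext (LinearMap.ext fun x => LinearMap.congr_fun comp_eq x)⟩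

variable {A} {A' : Type u} [CommRing A'] [Algebra S A'] [Algebra B A'] [Module A' M]
  [IsScalarTower S A' M] [IsScalarTower B A' M] {F : ℕ → Type u} [∀ n, AddCommGroup (F n)]
  [∀ n, Module B (F n)] {D : ∀ n, F (n + 1) →ₗ[B] F n} {K K' : Type u} [AddCommGroup K]
  [Module A K] [AddCommGroup K'] [Module A' K'] {ε : A ⊗[B] F 0 →ₗ[A] K}
  {ε' : A' ⊗[B] F 0 →ₗ[A'] K'}

/-- The isomorphism `M ⊗[A] (A ⊗[B] F) ≅ M ⊗[A'] (A' ⊗[B] F)` of complexes of `S`-modules, both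
sides being `M ⊗[B] F`. -/
noncomputable def tensorComplexIso
    (h : IsResolution (X := fun n => A ⊗[B] F n) (fun n => (D n).baseChange A) ε)
    (h' : IsResolution (X := fun n => A' ⊗[B] F n) (fun n => (D n).baseChange A') ε') :
    ((ModuleCat.restrictScalars (algebraMap S A)).mapHomologicalComplex _).obj
      ((((MonoidalCategory.tensoringLeft (ModuleCat.{u} A)).obj
        (ModuleCat.of A M)).mapHomologicalComplex _).obj h.complex) ≅
    ((ModuleCat.restrictScalars (algebraMap S A')).mapHomologicalComplex _).obj
      ((((MonoidalCategory.tensoringLeft (ModuleCat.{u} A')).obj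
        (ModuleCat.of A' M)).mapHomologicalComplex _).obj h'.complex) :=
  HomologicalComplex.Hom.isoOfComponents
    (fun n => cancelBaseChangeIso S A M (F n) ≪≫ (cancelBaseChangeIso S A' M (F n)).symm) (by
      rintro _ n rfl
      simp only [Functor.mapHomologicalComplex_obj_d, IsResolution.complex_d]
      exact ((commSq_cancelBaseChangeIso S A M (D n)).horiz_comp
        (commSq_cancelBaseChangeIso S A' M (D n)).horiz_inv).w)

variable [∀ n, Module.Projective B (F n)]

theorem nonempty_tor_iso
    (h : IsResolution (X := fun n => A ⊗[B] F n) (fun n => (D n).baseChange A) ε)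
    (h' : IsResolution (X := fun n => A' ⊗[B] F n) (fun n => (D n).baseChange A') ε') (i : ℕ) :
    Nonempty ((ModuleCat.restrictScalars (algebraMap S A)).obj
      (((Tor (ModuleCat A) i).obj (ModuleCat.of A M)).obj (ModuleCat.of A K)) ≅
      (ModuleCat.restrictScalars (algebraMap S A')).obj
        (((Tor (ModuleCat A') i).obj (ModuleCat.of A' M)).obj (ModuleCat.of A' K'))) := by
  let T := (MonoidalCategory.tensoringLeft (ModuleCat.{u} A)).obj (ModuleCat.of A M)
  let T' := (MonoidalCategory.tensoringLeft (ModuleCat.{u} A')).obj (ModuleCat.of A' M)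
  let ρ := ModuleCat.restrictScalars (algebraMap S A)
  let ρ' := ModuleCat.restrictScalars (algebraMap S A')
  let torIso := h.toProjectiveResolution.isoLeftDerivedObj T i
  let torIso' := h'.toProjectiveResolution.isoLeftDerivedObj T' i
  let homologyIso := (((T.mapHomologicalComplex _).obj h.complex).sc i).mapHomologyIso ρ
  let homologyIso' := (((T'.mapHomologicalComplex _).obj h'.complex).sc i).mapHomologyIso ρ'
  let compare := (HomologicalComplex.homologyFunctor _ _ i).mapIso (tensorComplexIso S M h h')
  exact ⟨ρ.mapIso torIso ≪≫ homologyIso.symm ≪≫ compare ≪≫ homologyIso' ≪≫ ρ'.mapIso torIso'.symm⟩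

end

end Tor

section Comparison

open IsLocalRing

theorem isScalarTower_mvPolynomial {Q A M σ : Type*} [CommRing Q] [CommRing A] [Algebra Q A]
    [AddCommGroup M] [Module Q M] [Module A M] [IsScalarTower Q A M] [Algebra (MvPolynomial σ Q) A]
    [IsScalarTower Q (MvPolynomial σ Q) A] [Module (MvPolynomial σ Q) M]
    (smul_eq : ∀ (b : MvPolynomial σ Q) (m : M), b • m = MvPolynomial.constantCoeff b • m)
    {c : σ → Q} (hc : ∀ s, c s ∈ Module.annihilator Q M)
    (algebraMap_X : ∀ s, algebraMap (MvPolynomial σ Q) A (.X s) = algebraMap Q A (c s)) :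
    IsScalarTower (MvPolynomial σ Q) A M := by
  suffices ∀ (b : MvPolynomial σ Q) (m : M),
      algebraMap (MvPolynomial σ Q) A b • m = MvPolynomial.constantCoeff b • m from
    .of_algebraMap_smul fun b m => (this b m).trans (smul_eq b m).symm
  intro b m
  induction b using MvPolynomial.induction_on generalizing m with
  | C q =>
    rw [← MvPolynomial.algebraMap_eq, ← IsScalarTower.algebraMap_apply, algebraMap_smul,
      MvPolynomial.algebraMap_eq, MvPolynomial.constantCoeff_C]
  | add b b' hb hb' => rw [map_add, map_add, add_smul, add_smul, hb, hb']
  | mul_X b s _ =>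
    rw [map_mul, map_mul, MvPolynomial.constantCoeff_X, mul_zero, zero_smul, mul_smul,
      algebraMap_X, algebraMap_smul (R := Q), Module.mem_annihilator.1 (hc s) m, smul_zero]

theorem nonempty_tor_iso_of_mvPolynomial {Q A A' σ : Type u} [CommRing Q] [CommRing A]
    [CommRing A'] [Algebra Q A] [Algebra Q A'] [Algebra (MvPolynomial σ Q) A]
    [Algebra (MvPolynomial σ Q) A'] [IsScalarTower Q (MvPolynomial σ Q) A]
    [IsScalarTower Q (MvPolynomial σ Q) A'] (M : Type u) [AddCommGroup M] [Module Q M]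
    [Module A M] [Module A' M] [IsScalarTower Q A M] [IsScalarTower Q A' M] {c c' : σ → Q}
    (hc : ∀ s, c s ∈ Module.annihilator Q M) (hc' : ∀ s, c' s ∈ Module.annihilator Q M)
    (algebraMap_X : ∀ s, algebraMap (MvPolynomial σ Q) A (.X s) = algebraMap Q A (c s))
    (algebraMap_X' : ∀ s, algebraMap (MvPolynomial σ Q) A' (.X s) = algebraMap Q A' (c' s))
    {F : ℕ → Type u} [∀ n, AddCommGroup (F n)] [∀ n, Module (MvPolynomial σ Q) (F n)]
    [∀ n, Module.Projective (MvPolynomial σ Q) (F n)]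
    {D : ∀ n, F (n + 1) →ₗ[MvPolynomial σ Q] F n} {K K' : Type u} [AddCommGroup K] [Module A K]
    [AddCommGroup K'] [Module A' K'] {ε : A ⊗[MvPolynomial σ Q] F 0 →ₗ[A] K}
    {ε' : A' ⊗[MvPolynomial σ Q] F 0 →ₗ[A'] K'}
    (h : IsResolution (X := fun n => A ⊗[MvPolynomial σ Q] F n) (fun n => (D n).baseChange A) ε)
    (h' : IsResolution (X := fun n => A' ⊗[MvPolynomial σ Q] F n) (fun n => (D n).baseChange A')
      ε') (i : ℕ) :
    Nonempty ((ModuleCat.restrictScalars (algebraMap Q A)).obj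
      (((Tor (ModuleCat A) i).obj (ModuleCat.of A M)).obj (ModuleCat.of A K)) ≅
      (ModuleCat.restrictScalars (algebraMap Q A')).obj
        (((Tor (ModuleCat A') i).obj (ModuleCat.of A' M)).obj (ModuleCat.of A' K'))) := by
  let : Module (MvPolynomial σ Q) M := Module.compHom M MvPolynomial.constantCoeff
  have smul_eq (b : MvPolynomial σ Q) (m : M) : b • m = MvPolynomial.constantCoeff b • m := rfl
  have : IsScalarTower Q (MvPolynomial σ Q) M := .of_algebraMap_smul fun q m => by
    rw [smul_eq, MvPolynomial.algebraMap_eq, MvPolynomial.constantCoeff_C]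
  have := isScalarTower_mvPolynomial smul_eq hc algebraMap_X
  have := isScalarTower_mvPolynomial smul_eq hc' algebraMap_X'
  exact nonempty_tor_iso Q M h h' i

theorem residueField_map_bijective {Q R : Type*} [CommRing Q] [IsLocalRing Q] [CommRing R]
    [IsLocalRing R] {φ : Q →+* R} [IsLocalHom φ] (surj : Function.Surjective φ) :
    Function.Bijective (ResidueField.map φ) := by
  refine ⟨(ResidueField.map φ).injective, .of_comp (g := residue Q) ?_⟩
  exact residue_surjective.comp surj

theorem finrank_residueField_tensorProduct_eq {Q R : Type u} [CommRing Q] [IsLocalRing Q]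
    [CommRing R] [IsLocalRing R] [Algebra Q R] (surj : Function.Surjective (algebraMap Q R))
    {X Y : Type u} [AddCommGroup X] [Module Q X] [Module R X] [IsScalarTower Q R X]
    [AddCommGroup Y] [Module Q Y] (e : X ≃ₗ[Q] Y) :
    Module.finrank (ResidueField R) (ResidueField R ⊗[R] X) =
      Module.finrank (ResidueField Q) (ResidueField Q ⊗[Q] Y) := by
  have : IsLocalHom (algebraMap Q R) := .of_surjective _ surj
  have bijective := residueField_map_bijective surj
  let residueEquiv : ResidueField Q ≃ₗ[Q] ResidueField R :=
    .ofBijective (IsScalarTower.toAlgHom Q (ResidueField Q) (ResidueField R)).toLinearMap bijective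
  have : CompatibleSMul Q R (ResidueField R) X := .of_algebraMap_surjective _ _ surj
  let tensorEquiv : ResidueField Q ⊗[Q] Y ≃ₗ[Q] ResidueField R ⊗[R] X :=
    TensorProduct.congr residueEquiv e.symm ≪≫ₗ
      (TensorProduct.equivOfCompatibleSMul Q R Q (ResidueField R) X).symm
  refine (congrArg Cardinal.toNat (rank_eq_of_equiv_equiv
    (algebraMap (ResidueField Q) (ResidueField R)) tensorEquiv.toAddEquiv bijective ?_)).symm
  intro a t
  induction t using TensorProduct.induction_on with
  | zero => simp
  | add t t' ht ht' => rw [smul_add, map_add, ht, ht', map_add, smul_add]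
  | tmul b y =>
    rw [TensorProduct.smul_tmul']
    exact congrArg (· ⊗ₜ[R] e.symm y) (map_mul (algebraMap _ _) a b)

theorem bettiNumber_eq_of_nonempty_iso {Q R : Type} [CommRing Q] [IsLocalRing Q] [CommRing R]
    [IsLocalRing R] [Algebra Q R] (surj : Function.Surjective (algebraMap Q R)) {M N : Type}
    [AddCommGroup M] [Module R M] [AddCommGroup N] [Module Q N] {i : ℕ}
    (h : Nonempty ((ModuleCat.restrictScalars (algebraMap Q R)).obj
      (((Tor (ModuleCat R) i).obj (ModuleCat.of R M)).obj (ModuleCat.of R (ResidueField R))) ≅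
      ((Tor (ModuleCat Q) i).obj (ModuleCat.of Q N)).obj (ModuleCat.of Q (ResidueField Q)))) :
    bettiNumber R M i = bettiNumber Q N i := by
  obtain ⟨e⟩ := h
  let T := ((Tor (ModuleCat R) i).obj (ModuleCat.of R M)).obj (ModuleCat.of R (ResidueField R))
  let : Module Q T := Module.compHom T (algebraMap Q R)
  have : IsScalarTower Q R T := .of_algebraMap_smul fun _ _ => rfl
  exact finrank_residueField_tensorProduct_eq (X := T) surj e.toLinearEquiv

end Comparison

end ExactZerodivisor

open IsLocalRing ExactZerodivisor in
theorem betti_eq_of_exact_zerodivisor_of_ann_general {Q R : Type u} [CommRing Q] [IsLocalRing Q]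
    [CommRing R] [IsLocalRing R] [Algebra Q R] {f g : Q} (h : IsExactPair f g Q)
    (hg : g ∈ maximalIdeal Q) (surj : Function.Surjective (algebraMap Q R))
    (ker_eq : RingHom.ker (algebraMap Q R) = Ideal.span {f}) (M : Type u) [AddCommGroup M]
    [Module Q M] [Module R M] [IsScalarTower Q R M]
    (hf : f ∈ maximalIdeal Q * Module.annihilator Q M) (i : ℕ) :
    Nonempty ((ModuleCat.restrictScalars (algebraMap Q R)).obj
      (((Tor (ModuleCat R) i).obj (ModuleCat.of R M)).obj (ModuleCat.of R (ResidueField R))) ≅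
      ((Tor (ModuleCat Q) i).obj (ModuleCat.of Q M)).obj (ModuleCat.of Q (ResidueField Q))) := by
  obtain ⟨P, _, _, d, z, hd, hz⟩ := exists_isPeriodicForm h hg hf
  obtain ⟨Y, _, _, dY, ε, projective_Y, hY⟩ := exists_isResolution Q P
  obtain ⟨F, _, _, D, projective_F, hF⟩ :=
    exists_forall_isResolution_residueField hd.apply_smul_comm hd.range_eq hz hY
  let toR : MvPolynomial (Module.annihilator Q M) Q →ₐ[Q] R :=
    MvPolynomial.aeval fun j => algebraMap Q R (1 * j)
  let toQ : MvPolynomial (Module.annihilator Q M) Q →ₐ[Q] Q := MvPolynomial.aeval fun j => g * j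
  have toR_X (j) : toR (.X j) = algebraMap Q R (1 * j) := MvPolynomial.aeval_X ..
  have toQ_X (j) : toQ (.X j) = g * j := MvPolynomial.aeval_X ..
  let := toR.toAlgebra
  let := toQ.toAlgebra
  have : IsScalarTower Q (MvPolynomial (Module.annihilator Q M) Q) R :=
    .of_algebraMap_eq' toR.comp_algebraMap.symm
  have : IsScalarTower Q (MvPolynomial (Module.annihilator Q M) Q) Q :=
    .of_algebraMap_eq' toQ.comp_algebraMap.symm
  obtain ⟨εR, hR⟩ := hF R 1 toR_X surj
    (by simpa only [one_smul] using hd.isPeriodic_baseChange h hg surj ker_eq)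
    (hY.baseChange_of_isExactPair h (h.of_isPeriodicForm hd) surj ker_eq)
  obtain ⟨εQ, hQ⟩ := hF Q g toQ_X Function.surjective_id (hd.isPeriodic_smul h).baseChange_self
    (hY.baseChange_of_flat Q)
  obtain ⟨e⟩ := nonempty_tor_iso_of_mvPolynomial M (fun j => Ideal.mul_mem_left _ 1 j.2)
    (fun j => Ideal.mul_mem_left _ g j.2) toR_X toQ_X hR hQ i
  exact ⟨e ≪≫ ModuleCat.restrictScalarsId'App _ rfl _⟩

/-- **Main theorem, exact zerodivisor case.** Let `f, g` be an exact pair of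
zerodivisors in the maximal ideal `m` of a Noetherian local ring `Q` (so
`ann_Q(f) = (g)` and `ann_Q(g) = (f)`), and let `R = Q/(f)`. If `M` is a
finitely generated `R`-module with `f ∈ m·ann_Q(M)`, then
`β_i^R(M) = β_i^Q(M)` for all `i ≥ 0`, i.e. `P_M^R(t) = P_M^Q(t)`. -/
theorem betti_eq_of_exact_zerodivisor_of_ann
    (Q : Type) [CommRing Q] [IsNoetherianRing Q] [IsLocalRing Q]
    (f g : Q) (hf0 : f ≠ 0) (hg0 : g ≠ 0)
    (hfm : f ∈ IsLocalRing.maximalIdeal Q) (hgm : g ∈ IsLocalRing.maximalIdeal Q)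
    (hannf : ∀ x : Q, x * f = 0 ↔ x ∈ Ideal.span {g})
    (hanng : ∀ x : Q, x * g = 0 ↔ x ∈ Ideal.span {f})
    [IsLocalRing (Q ⧸ Ideal.span {f})]
    (M : Type) [AddCommGroup M] [Module Q M] [Module (Q ⧸ Ideal.span {f}) M]
    [IsScalarTower Q (Q ⧸ Ideal.span {f}) M]
    [Module.Finite (Q ⧸ Ideal.span {f}) M]
    (hann : f ∈ IsLocalRing.maximalIdeal Q * Module.annihilator Q M)
    (i : ℕ) :
    bettiNumber (Q ⧸ Ideal.span {f}) M i = bettiNumber Q M i := by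
  exact ExactZerodivisor.bettiNumber_eq_of_nonempty_iso Ideal.Quotient.mk_surjective
    (betti_eq_of_exact_zerodivisor_of_ann_general (.of_mul_eq_zero_iff hannf hanng) hgm
      Ideal.Quotient.mk_surjective Ideal.mk_ker M hann i)
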